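/- For every n ≥ 0 and every t ∈ ℝ, the quantity τ_n(t) := L^{(t)}[x·Q_n(x;t)] satisfies τ_n(t) = σ_{n,n}(t) · Σ_{k=1}^{n+1} γ_k(t), where γ_k(t) = α_{k+1}(t) + β_k(t). -/

import Mathlib

open Polynomial

/-- The moment functional `L^{(t)}` applied to `x^m · P(x)`, where the moments are
`L^{(t)}[x^k] = ν k t`. -/
noncomputable def Lmom (ν : ℤ → ℝ → ℂ) (m : ℤ) (P : Polynomial ℂ) (t : ℝ) : ℂ :=
  P.sum fun j c => c * ν (m + (j : ℤ)) t

theorem Lmom_sub (ν : ℤ → ℝ → ℂ) (m : ℤ) (P R : Polynomial ℂ) (t : ℝ) :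
    Lmom ν m (P - R) t = Lmom ν m P t - Lmom ν m R t := by
  rw [eq_sub_iff_add_eq]
  have h : Lmom ν m (P - R + R) t = Lmom ν m (P - R) t + Lmom ν m R t := by
    unfold Lmom
    exact Polynomial.sum_add_index _ _ _ (by simp) (by intros; ring)
  rw [← h, sub_add_cancel]

theorem Lmom_C_mul (ν : ℤ → ℝ → ℂ) (m : ℤ) (a : ℂ) (P : Polynomial ℂ) (t : ℝ) :
    Lmom ν m (C a * P) t = a * Lmom ν m P t := by
  unfold Lmom
  rw [← Polynomial.smul_eq_C_mul, Polynomial.sum_smul_index _ _ _ (by simp)]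
  simp only [Polynomial.sum_def, Finset.mul_sum, mul_assoc]

theorem Lmom_add (ν : ℤ → ℝ → ℂ) (m : ℤ) (P R : Polynomial ℂ) (t : ℝ) :
    Lmom ν m (P + R) t = Lmom ν m P t + Lmom ν m R t := by
  unfold Lmom
  exact Polynomial.sum_add_index _ _ _ (by simp) (by intros; ring)

theorem Lmom_monomial (ν : ℤ → ℝ → ℂ) (m : ℤ) (j : ℕ) (a : ℂ) (t : ℝ) :
    Lmom ν m (monomial j a) t = a * ν (m + j) t := by
  unfold Lmom
  exact Polynomial.sum_monomial_index _ _ (by simp)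

theorem Lmom_X_mul (ν : ℤ → ℝ → ℂ) (m : ℤ) (P : Polynomial ℂ) (t : ℝ) :
    Lmom ν m (X * P) t = Lmom ν (m + 1) P t := by
  induction P using Polynomial.induction_on' with
  | add p q hp hq => rw [mul_add, Lmom_add, Lmom_add, hp, hq]
  | monomial j a =>
    rw [Polynomial.X_mul_monomial, Lmom_monomial, Lmom_monomial]
    push_cast
    rw [show m + ((j : ℤ) + 1) = m + 1 + j by ring]

theorem stmt_5 (p q : ℂ) (ν : ℤ → ℝ → ℂ)
    (hνdiff : ∀ k, Differentiable ℝ (ν k))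
    (hνderiv : ∀ k t, deriv (ν k) t = -(p * ν (k + 1) t + q * ν (k - 1) t))
    (hν0 : ∀ t, ν 0 t ≠ 0)
    (Q : ℕ → ℝ → Polynomial ℂ)
    (hQ0 : ∀ t, Q 0 t = 1)
    (hQmonic : ∀ n t, (Q n t).Monic)
    (hQdeg : ∀ n t, (Q n t).natDegree = n)
    (hQdiff : ∀ n j, Differentiable ℝ fun t => (Q n t).coeff j)
    (β α : ℕ → ℝ → ℂ)
    (hβdiff : ∀ n, Differentiable ℝ (β n))
    (hαdiff : ∀ n, Differentiable ℝ (α n))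
    (hβ0 : ∀ t, β 0 t = 1) (hα0 : ∀ t, α 0 t = -1) (hα1 : ∀ t, α 1 t = 0)
    (hβne : ∀ n, 1 ≤ n → ∀ t, β n t ≠ 0)
    (hαne : ∀ n, 1 ≤ n → ∀ t, α (n + 1) t ≠ 0)
    (horth : ∀ n : ℕ, 1 ≤ n → ∀ s < n, ∀ t : ℝ, Lmom ν (-(n : ℤ) + (s : ℤ)) (Q n t) t = 0)
    (hQ1 : ∀ t, Q 1 t = X - C (β 1 t))
    (hrec : ∀ n, 1 ≤ n → ∀ t,
      Q (n + 1) t = (X - C (β (n + 1) t)) * Q n t - C (α (n + 1) t) * (X * Q (n - 1) t)) :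
    ∀ (n : ℕ) (t : ℝ),
      Lmom ν 1 (Q n t) t =
        Lmom ν 0 (Q n t) t * ∑ k ∈ Finset.Icc 1 (n + 1), (α (k + 1) t + β k t) := by
  intro n t
  have hR : ∀ n, 1 ≤ n → ∀ m, Lmom ν m (Q (n + 1) t) t = Lmom ν (m + 1) (Q n t) t
      - β (n + 1) t * Lmom ν m (Q n t) t - α (n + 1) t * Lmom ν (m + 1) (Q (n - 1) t) t := by
    intro n hn m
    rw [hrec n hn t, Lmom_sub, sub_mul, Lmom_sub, Lmom_X_mul, Lmom_C_mul, Lmom_C_mul, Lmom_X_mul]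
  have hR0 : Lmom ν 0 (Q 1 t) t = Lmom ν 1 (Q 0 t) t - β 1 t * Lmom ν 0 (Q 0 t) t := by
    have : Q 1 t = X * Q 0 t - C (β 1 t) * Q 0 t := by rw [hQ0, hQ1]; ring
    rw [this, Lmom_sub, Lmom_X_mul, Lmom_C_mul, zero_add]
  have hO : ∀ n, 1 ≤ n → Lmom ν (-1) (Q n t) t = 0 := by
    intro n hn
    have h := horth n hn (n - 1) (by omega) t
    rwa [show -(n : ℤ) + ((n - 1 : ℕ) : ℤ) = -1 by omega] at h
  have hS : ∀ n, Lmom ν 0 (Q (n + 1) t) t = α (n + 2) t * Lmom ν 0 (Q n t) t := by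
    intro n
    have h := hR (n + 1) (by omega) (-1)
    rw [hO _ (by omega), hO _ (by omega)] at h
    simp only [Nat.add_sub_cancel, Int.reduceNeg, Int.reduceAdd, neg_add_cancel] at h
    linear_combination -h
  induction n with
  | zero =>
    have h := hS 0
    rw [hR0] at h
    simp only [zero_add, Finset.Icc_self, Finset.sum_singleton] at h ⊢
    linear_combination h
  | succ n ih =>
    rw [Finset.sum_Icc_succ_top (by omega)]
    have h := hR (n + 1) (by omega) 0
    have h1 := hS n
    have h2 := hS (n + 1)
    simp only [Nat.add_sub_cancel, zero_add] at h
    rw [ih] at h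
    simp only [add_assoc, Nat.reduceAdd] at *
    generalize (∑ k ∈ Finset.Icc 1 (n + 1), (α (k + 1) t + β k t)) = S at *
    linear_combination -h + h2 - S * h1
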